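/- Let 0 < a ≤ 1 and s = σ + it ∈ ℂ with σ ≤ −(4a + 1 + 2⌊1 − 2a⌋) and |t| ≤ 1. If ζ(s, a) = 0 then t = 0 (the zero lies on the negative real axis); moreover, for each integer n ≥ 1 − 2a the Hurwitz zeta function has exactly one real zero in the interval (−2n − 4a − 1, −2n − 4a + 1). -/

import Mathlib

open HurwitzZeta Set

set_option linter.unusedSimpArgs false

namespace Spira

/-- The `m`-th term of the Hurwitz series. -/
noncomputable def E (a : ℝ) (m : ℕ) (w : ℂ) : ℂ :=
  Complex.cos (Real.pi * w / 2 - 2 * Real.pi * a * m) * Complex.exp (-w * (Real.log m : ℝ))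

noncomputable def H (a : ℝ) (w : ℂ) : ℂ := ∑' n : ℕ, E a (n + 2) w

lemma normsq_cos (z : ℂ) : ‖Complex.cos z‖ ^ 2 = Real.cosh z.im ^ 2 - Real.sin z.re ^ 2 := by
  rw [Complex.sq_norm, Complex.cos_eq, Complex.normSq_apply]
  simp only [← Complex.ofReal_cos, ← Complex.ofReal_sin, ← Complex.ofReal_cosh,
    ← Complex.ofReal_sinh, ← Complex.ofReal_mul, Complex.add_re, Complex.add_im, Complex.sub_re,
    Complex.sub_im, Complex.re_ofReal_mul, Complex.im_ofReal_mul, Complex.ofReal_re,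
    Complex.ofReal_im, Complex.I_re, Complex.I_im, Complex.one_re, Complex.one_im]
  have h1 := Real.cosh_sq z.im
  have h2 := Real.sin_sq_add_cos_sq z.re
  linear_combination (Real.cosh z.im ^ 2) * h2 - (Real.sin z.re)^2 * h1

lemma normsq_sin (z : ℂ) : ‖Complex.sin z‖ ^ 2 = Real.cosh z.im ^ 2 - Real.cos z.re ^ 2 := by
  rw [Complex.sq_norm, Complex.sin_eq, Complex.normSq_apply]
  simp only [← Complex.ofReal_cos, ← Complex.ofReal_sin, ← Complex.ofReal_cosh,
    ← Complex.ofReal_sinh, ← Complex.ofReal_mul, Complex.add_re, Complex.add_im, Complex.sub_re,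
    Complex.sub_im, Complex.re_ofReal_mul, Complex.im_ofReal_mul, Complex.ofReal_re,
    Complex.ofReal_im, Complex.I_re, Complex.I_im, Complex.one_re, Complex.one_im]
  have h1 := Real.cosh_sq z.im
  have h2 := Real.sin_sq_add_cos_sq z.re
  linear_combination (Real.cosh z.im ^ 2) * h2 - (Real.cos z.re)^2 * h1

lemma norm_cos_sub_one (z : ℂ) : ‖Complex.cos z - 1‖ ≤ Real.cosh z.im - Real.cos z.re := by
  have h0 : 0 ≤ Real.cosh z.im - Real.cos z.re := by
    linarith [Real.one_le_cosh z.im, Real.cos_le_one z.re]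
  apply le_of_sq_le_sq _ h0
  rw [Complex.sq_norm, Complex.cos_eq, Complex.normSq_apply]
  simp only [← Complex.ofReal_cos, ← Complex.ofReal_sin, ← Complex.ofReal_cosh,
    ← Complex.ofReal_sinh, ← Complex.ofReal_mul, Complex.add_re, Complex.add_im, Complex.sub_re,
    Complex.sub_im, Complex.re_ofReal_mul, Complex.im_ofReal_mul, Complex.ofReal_re,
    Complex.ofReal_im, Complex.I_re, Complex.I_im, Complex.one_re, Complex.one_im]
  have h1 := Real.cosh_sq z.im
  have h2 := Real.sin_sq_add_cos_sq z.re
  apply le_of_eq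
  linear_combination (Real.cosh z.im ^ 2 - 1) * h2 - (Real.sin z.re)^2 * h1

lemma norm_cos_le (z : ℂ) : ‖Complex.cos z‖ ≤ Real.cosh z.im := by
  apply le_of_sq_le_sq _ (Real.cosh_pos _).le
  rw [normsq_cos]; nlinarith [sq_nonneg (Real.sin z.re)]

lemma norm_sin_le (z : ℂ) : ‖Complex.sin z‖ ≤ Real.cosh z.im := by
  apply le_of_sq_le_sq _ (Real.cosh_pos _).le
  rw [normsq_sin]; nlinarith [sq_nonneg (Real.cos z.re)]

lemma arg_im (a : ℝ) (m : ℕ) (w : ℂ) :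
    (Real.pi * w / 2 - 2 * Real.pi * a * m : ℂ).im = Real.pi / 2 * w.im := by
  have : (Real.pi * w / 2 - 2 * Real.pi * a * m : ℂ)
    = ((Real.pi / 2 : ℝ) : ℂ) * w - ((2 * Real.pi * a * m : ℝ) : ℂ) := by push_cast; ring
  rw [this, Complex.sub_im, Complex.im_ofReal_mul, Complex.ofReal_im, sub_zero]

lemma norm_exp (m : ℕ) (w : ℂ) :
    ‖Complex.exp (-w * (Real.log m : ℝ))‖ = Real.exp (-w.re * Real.log m) := by
  rw [Complex.norm_exp, Complex.re_mul_ofReal, Complex.neg_re]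

lemma exp_bound2 (m : ℕ) (hm : 1 ≤ m) (u : ℝ) (hu : 2 ≤ u) :
    Real.exp (-u * Real.log m) ≤ 1 / (m : ℝ) ^ 2 := by
  have hm' : (1 : ℝ) ≤ m := by exact_mod_cast hm
  have hl := Real.log_nonneg hm'
  calc Real.exp (-u * Real.log m) ≤ Real.exp (-(Real.log m + Real.log m)) := by
        apply Real.exp_le_exp.2; nlinarith
    _ = 1 / (m : ℝ) ^ 2 := by
        rw [Real.exp_neg, Real.exp_add, Real.exp_log (by linarith)]; field_simp

lemma exp_bound52 (m : ℕ) (hm : 2 ≤ m) (u : ℝ) (hu : 5 / 2 ≤ u) :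
    Real.exp (-u * Real.log m) ≤ 1 / (m : ℝ) ^ 2 * (1 / √(m : ℝ)) := by
  have hm' : (2 : ℝ) ≤ m := by exact_mod_cast hm
  have hl := Real.log_nonneg (show (1:ℝ) ≤ m by linarith)
  have hs : 0 < √(m : ℝ) := Real.sqrt_pos.2 (by linarith)
  calc Real.exp (-u * Real.log m)
      ≤ Real.exp (-(Real.log m + Real.log m + Real.log m / 2)) := by
        apply Real.exp_le_exp.2; nlinarith
    _ = 1 / (m : ℝ) ^ 2 * (1 / √(m : ℝ)) := by
        rw [← Real.log_sqrt (by linarith), Real.exp_neg, Real.exp_add, Real.exp_add,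
          Real.exp_log (by linarith), Real.exp_log hs]; field_simp

lemma norm_E (a : ℝ) (m : ℕ) (w : ℂ) :
    ‖E a m w‖ ≤ Real.cosh (Real.pi / 2 * w.im) * Real.exp (-w.re * Real.log m) := by
  rw [E, norm_mul, norm_exp, ← arg_im a m w]
  gcongr
  exact norm_cos_le _

lemma sum_tail : HasSum (fun n : ℕ => 1 / ((n + 2 : ℕ) : ℝ) ^ 2) (Real.pi ^ 2 / 6 - 1) := by
  have := (hasSum_nat_add_iff' 2).2 hasSum_zeta_two
  simpa [Finset.sum_range_succ] using this

lemma tail_lt : Real.pi ^ 2 / 6 - 1 ≤ 0.645 := by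
  nlinarith [Real.pi_lt_d6, Real.pi_pos]

lemma E_le2 (a : ℝ) (w : ℂ) (hw : 2 ≤ w.re) (n : ℕ) :
    ‖E a (n + 2) w‖ ≤ Real.cosh (Real.pi / 2 * w.im) * (1 / ((n + 2 : ℕ) : ℝ) ^ 2) := by
  refine (norm_E _ _ _).trans ?_
  have := Real.cosh_pos (Real.pi / 2 * w.im)
  gcongr
  exact exp_bound2 _ (by omega) _ hw

lemma summable_E (a : ℝ) (w : ℂ) (hw : 2 ≤ w.re) : Summable (fun n : ℕ => E a (n + 2) w) :=
  Summable.of_norm_bounded (sum_tail.summable.mul_left _) (E_le2 a w hw)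

lemma H_le2 (a : ℝ) (w : ℂ) (hw : 2 ≤ w.re) :
    ‖H a w‖ ≤ 0.645 * Real.cosh (Real.pi / 2 * w.im) := by
  have := tsum_of_norm_bounded (sum_tail.mul_left _) (E_le2 a w hw)
  refine this.trans ?_
  rw [mul_comm]
  have := Real.cosh_pos (Real.pi / 2 * w.im)
  gcongr
  exact tail_lt

lemma H_le52 (a : ℝ) (w : ℂ) (hw : 5 / 2 ≤ w.re) :
    ‖H a w‖ ≤ 0.645 / √2 * Real.cosh (Real.pi / 2 * w.im) := by
  have hc := Real.cosh_pos (Real.pi / 2 * w.im)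
  have := tsum_of_norm_bounded (f := fun n : ℕ => E a (n + 2) w)
    (sum_tail.mul_left (Real.cosh (Real.pi / 2 * w.im) * (1 / √2))) (by
      intro n
      refine (norm_E _ _ _).trans ?_
      rw [mul_assoc]
      gcongr
      refine (exp_bound52 _ (by omega) _ hw).trans ?_
      rw [mul_comm]
      gcongr
      push_cast; linarith [(Nat.cast_nonneg n : (0:ℝ) ≤ n)])
  refine this.trans ?_
  have := tail_lt
  have h2 : 0 < √(2:ℝ) := by positivity
  calc _ = (Real.pi ^ 2 / 6 - 1) * (Real.cosh (Real.pi / 2 * w.im) * (1 / √2)) := by ring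
    _ ≤ 0.645 * (Real.cosh (Real.pi / 2 * w.im) * (1 / √2)) := by gcongr
    _ = _ := by ring

/-- derivative factor bound -/
lemma log_bound (m : ℕ) (hm : 2 ≤ m) :
    (Real.log m + Real.pi / 2) * (1 / √(m : ℝ)) ≤ Real.pi / 2 * 1.0192 := by
  have hm' : (2 : ℝ) ≤ m := by exact_mod_cast hm
  have h2 : 0 < √(2:ℝ) := by positivity
  have hs : 0 < √(m : ℝ) := Real.sqrt_pos.2 (by linarith)
  have hq : Real.log (√m / √2) ≤ √m / √2 - 1 := Real.log_le_sub_one_of_pos (by positivity)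
  rw [Real.log_div hs.ne' h2.ne', Real.log_sqrt (by linarith), Real.log_sqrt (by norm_num)] at hq
  have hl := Real.log_two_lt_d9
  have hms : √2 ≤ √(m : ℝ) := Real.sqrt_le_sqrt hm'
  set q := √(m:ℝ) / √2 with hqdef
  have hmq : √(m:ℝ) = q * √2 := by rw [hqdef]; field_simp
  have hq1 : 1 ≤ q := by rw [hqdef, le_div_iff₀ h2]; linarith
  rw [mul_one_div, div_le_iff₀ hs, hmq]
  have hs2 : 1.41421 ≤ √(2:ℝ) := Real.le_sqrt_of_sq_le (by norm_num)
  have hp := Real.pi_gt_d6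
  have hp' := Real.pi_lt_d6
  have : Real.log m + Real.pi / 2 ≤ (Real.log 2 + Real.pi / 2) * q := by
    have hl' := Real.log_two_gt_d9
    nlinarith [mul_nonneg (sub_nonneg.2 hq1) (show 0 ≤ Real.log 2 + Real.pi / 2 - 2 by linarith)]
  refine this.trans ?_
  have : Real.log 2 + Real.pi / 2 ≤ Real.pi / 2 * 1.0192 * √2 := by nlinarith
  nlinarith

lemma hasDeriv_E (a : ℝ) (m : ℕ) (w : ℂ) : HasDerivAt (E a m)
    (-Complex.sin (Real.pi * w / 2 - 2 * Real.pi * a * m) * (Real.pi / 2) *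
      Complex.exp (-w * (Real.log m : ℝ)) +
     Complex.cos (Real.pi * w / 2 - 2 * Real.pi * a * m) *
      (Complex.exp (-w * (Real.log m : ℝ)) * (-(Real.log m : ℝ)))) w := by
  have h1 : HasDerivAt (fun w : ℂ => (Real.pi * w / 2 - 2 * Real.pi * a * m : ℂ))
      (Real.pi / 2) w := by
    simpa using (((hasDerivAt_id w).const_mul (Real.pi : ℂ)).div_const 2).sub_const
      (2 * Real.pi * a * m : ℂ)
  have h2 : HasDerivAt (fun w : ℂ => (-w * (Real.log m : ℝ) : ℂ)) (-(Real.log m : ℝ)) w := by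
    simpa using ((hasDerivAt_id w).neg.mul_const ((Real.log m : ℝ) : ℂ))
  exact h1.ccos.mul h2.cexp

lemma deriv_E_le (a : ℝ) (n : ℕ) (w : ℂ) (hw : 5 / 2 ≤ w.re) :
    ‖deriv (E a (n + 2)) w‖ ≤ Real.cosh (Real.pi / 2 * w.im) * (Real.pi / 2 * 1.0192) *
      (1 / ((n + 2 : ℕ) : ℝ) ^ 2) := by
  rw [(hasDeriv_E a (n + 2) w).deriv]
  set m := n + 2 with hm
  have hm' : (2 : ℝ) ≤ m := by exact_mod_cast (show 2 ≤ m by omega)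
  have hl := Real.log_nonneg (show (1:ℝ) ≤ m by linarith)
  have hc := Real.cosh_pos (Real.pi / 2 * w.im)
  have h1 := norm_cos_le (Real.pi * w / 2 - 2 * Real.pi * a * m : ℂ)
  have h2 := norm_sin_le (Real.pi * w / 2 - 2 * Real.pi * a * m : ℂ)
  rw [arg_im] at h1 h2
  have hp := Real.pi_pos
  have hpn : ‖(Real.pi / 2 : ℂ)‖ = Real.pi / 2 := by
    rw [norm_div, Complex.norm_real, Real.norm_of_nonneg hp.le]; simp
  calc _ ≤ Real.cosh (Real.pi / 2 * w.im) * (Real.pi / 2) * Real.exp (-w.re * Real.log m)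
        + Real.cosh (Real.pi / 2 * w.im) * (Real.exp (-w.re * Real.log m) * Real.log m) := by
        refine (norm_add_le _ _).trans ?_
        rw [norm_mul, norm_mul, norm_neg, norm_mul, norm_mul, norm_neg, norm_exp, hpn,
          Complex.norm_real, Real.norm_of_nonneg hl]
        gcongr
    _ = Real.cosh (Real.pi / 2 * w.im) * (Real.log m + Real.pi / 2) *
          Real.exp (-w.re * Real.log m) := by ring
    _ ≤ Real.cosh (Real.pi / 2 * w.im) * (Real.log m + Real.pi / 2) *
          (1 / (m : ℝ) ^ 2 * (1 / √(m : ℝ))) := by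
        gcongr
        exact exp_bound52 _ (by omega) _ hw
    _ = Real.cosh (Real.pi / 2 * w.im) * ((Real.log m + Real.pi / 2) * (1 / √(m : ℝ))) *
          (1 / (m : ℝ) ^ 2) := by ring
    _ ≤ _ := by
        refine mul_le_mul_of_nonneg_right (mul_le_mul_of_nonneg_left ?_ hc.le) (by positivity)
        exact log_bound m (by omega)

lemma H_lip (a : ℝ) (C : ℝ) (K : Set ℂ) (hK : Convex ℝ K) (h52 : ∀ w ∈ K, 5 / 2 ≤ w.re)
    (hC : ∀ w ∈ K, Real.cosh (Real.pi / 2 * w.im) ≤ C) (x y : ℂ) (hx : x ∈ K) (hy : y ∈ K) :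
    ‖H a y - H a x‖ ≤ C * (Real.pi / 2 * 1.0192) * 0.645 * ‖y - x‖ := by
  have hC0 : 0 < C := (Real.cosh_pos _).trans_le (hC x hx)
  have hp := Real.pi_pos
  rw [H, H, ← (summable_E a y (by linarith [h52 y hy])).tsum_sub
    (summable_E a x (by linarith [h52 x hx]))]
  have := tsum_of_norm_bounded (f := fun n : ℕ => E a (n + 2) y - E a (n + 2) x)
    (sum_tail.mul_left (C * (Real.pi / 2 * 1.0192) * ‖y - x‖)) (by
      intro n
      have := hK.norm_image_sub_le_of_norm_deriv_le (f := E a (n + 2))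
        (C := C * (Real.pi / 2 * 1.0192) * (1 / ((n + 2 : ℕ) : ℝ) ^ 2))
        (fun z _ => (hasDeriv_E a (n + 2) z).differentiableAt)
        (fun z hz => (deriv_E_le a n z (h52 z hz)).trans (by gcongr; exact hC z hz)) hx hy
      refine this.trans (le_of_eq (by ring)))
  refine this.trans ?_
  calc _ = C * (Real.pi / 2 * 1.0192) * (Real.pi ^ 2 / 6 - 1) * ‖y - x‖ := by ring
    _ ≤ _ := by gcongr; exact tail_lt

lemma E_sin (a : ℝ) (k : ℤ) (c : ℝ) (hc : c = 4 * a + 2 * k + 1) :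
    ∃ e : ℝ, (e = 1 ∨ e = -1) ∧
      ∀ w : ℂ, E a 1 w = e * Complex.sin (((Real.pi / 2 : ℝ) : ℂ) * (w - c)) := by
  have key : ∀ w : ℂ, E a 1 w =
      -Complex.sin (((Real.pi / 2 : ℝ) : ℂ) * (w - c) + k * Real.pi) := by
    intro w
    rw [← Complex.cos_add_pi_div_two, E]
    simp only [Nat.cast_one, Real.log_one, Complex.ofReal_zero, mul_zero, Complex.exp_zero, mul_one]
    congr 1
    rw [hc]; push_cast; ring
  rcases Int.even_or_odd' k with ⟨j, rfl | rfl⟩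
  · refine ⟨-1, Or.inr rfl, fun w => ?_⟩
    rw [key]
    have := (Complex.sin_periodic.int_mul j) (((Real.pi / 2 : ℝ) : ℂ) * (w - c))
    rw [← show (((Real.pi / 2 : ℝ) : ℂ) * (w - c) + j * (2 * Real.pi)) =
      (((Real.pi / 2 : ℝ) : ℂ) * (w - c) + (2 * j : ℤ) * Real.pi) by push_cast; ring, this]
    push_cast; ring
  · refine ⟨1, Or.inl rfl, fun w => ?_⟩
    rw [key]
    have := (Complex.sin_periodic.int_mul j) (((Real.pi / 2 : ℝ) : ℂ) * (w - c) + Real.pi)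
    rw [← show (((Real.pi / 2 : ℝ) : ℂ) * (w - c) + Real.pi + j * (2 * Real.pi)) =
      (((Real.pi / 2 : ℝ) : ℂ) * (w - c) + (2 * j + 1 : ℤ) * Real.pi) by push_cast; ring, this,
      Complex.sin_add_pi]
    push_cast; ring

lemma arg_re (c : ℝ) (w : ℂ) :
    (((Real.pi / 2 : ℝ) : ℂ) * (w - c)).re = Real.pi / 2 * (w.re - c) := by
  rw [Complex.re_ofReal_mul, Complex.sub_re, Complex.ofReal_re]

lemma arg_im' (c : ℝ) (w : ℂ) :
    (((Real.pi / 2 : ℝ) : ℂ) * (w - c)).im = Real.pi / 2 * w.im := by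
  rw [Complex.im_ofReal_mul, Complex.sub_im, Complex.ofReal_im, sub_zero]

lemma loc (a : ℝ) (k : ℤ) (c : ℝ) (hc : c = 4 * a + 2 * k + 1) (hc3 : 3 ≤ c) (w : ℂ)
    (hw : |w.re - c| ≤ 1) (h0 : E a 1 w + H a w = 0) :
    |w.re - c| ≤ 1 / 2 ∧ 0.8899 ≤ Real.cos (Real.pi / 2 * (w.re - c)) ∧
      Real.cosh (Real.pi / 2 * w.im) ≤ 1.1237 := by
  obtain ⟨e, he, hE⟩ := E_sin a k c hc
  have hp := Real.pi_pos
  have hn : ‖Complex.sin (((Real.pi / 2 : ℝ) : ℂ) * (w - c))‖ = ‖H a w‖ := by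
    have : H a w = -(e * Complex.sin (((Real.pi / 2 : ℝ) : ℂ) * (w - c))) := by
      rw [← hE]; linear_combination h0
    rw [this, norm_neg, norm_mul]
    rcases he with rfl | rfl <;> simp
  have hsq := normsq_sin (((Real.pi / 2 : ℝ) : ℂ) * (w - c))
  rw [hn, arg_re, arg_im'] at hsq
  have hC := Real.one_le_cosh (Real.pi / 2 * w.im)
  obtain ⟨hw1, hw2⟩ := abs_le.1 hw
  have hcos : 0 ≤ Real.cos (Real.pi / 2 * (w.re - c)) :=
    Real.cos_nonneg_of_neg_pi_div_two_le_of_le (by nlinarith) (by nlinarith)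
  have hcos1 := Real.cos_le_one (Real.pi / 2 * (w.re - c))
  have hH := H_le2 a w (by linarith)
  set X := Real.cos (Real.pi / 2 * (w.re - c)) with hX
  set Y := Real.cosh (Real.pi / 2 * w.im) with hY
  have hH2 : ‖H a w‖ ^ 2 ≤ (0.645 * Y) ^ 2 := by gcongr
  have hhalf : |w.re - c| ≤ 1 / 2 := by
    by_contra hcon
    push Not at hcon
    have h1 : X ≤ √2 / 2 := by
      rw [hX, ← Real.cos_abs, abs_mul, abs_of_pos (by positivity), ← Real.cos_pi_div_four]
      apply Real.cos_le_cos_of_nonneg_of_le_pi (by positivity) (by nlinarith) (by nlinarith)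
    have h2 : X ^ 2 ≤ (√2 / 2) ^ 2 := by gcongr
    rw [div_pow, Real.sq_sqrt (by norm_num)] at h2
    nlinarith
  have hH' := H_le52 a w (by linarith [(abs_le.1 hhalf).1])
  have hH2' : ‖H a w‖ ^ 2 ≤ (0.645 / √2 * Y) ^ 2 := by gcongr
  rw [mul_pow, div_pow, Real.sq_sqrt (by norm_num)] at hH2'
  refine ⟨hhalf, ?_, ?_⟩
  · by_contra hcon
    push Not at hcon
    nlinarith
  · by_contra hcon
    push Not at hcon
    nlinarith

lemma psi_lip (c κ : ℝ) (K : Set ℂ) (hK : Convex ℝ K)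
    (hb : ∀ w ∈ K, Real.cosh (Real.pi / 2 * w.im) - Real.cos (Real.pi / 2 * (w.re - c)) ≤ κ)
    (x y : ℂ) (hx : x ∈ K) (hy : y ∈ K) :
    ‖(Complex.sin (((Real.pi / 2 : ℝ) : ℂ) * (y - c)) - ((Real.pi / 2 : ℝ) : ℂ) * (y - c)) -
     (Complex.sin (((Real.pi / 2 : ℝ) : ℂ) * (x - c)) - ((Real.pi / 2 : ℝ) : ℂ) * (x - c))‖ ≤
     (Real.pi / 2 * κ) * ‖y - x‖ := by
  have hd : ∀ z : ℂ, HasDerivAt (fun w : ℂ => Complex.sin (((Real.pi / 2 : ℝ) : ℂ) * (w - c)) -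
      ((Real.pi / 2 : ℝ) : ℂ) * (w - c))
      (((Real.pi / 2 : ℝ) : ℂ) * (Complex.cos (((Real.pi / 2 : ℝ) : ℂ) * (z - c)) - 1)) z := by
    intro z
    have h1 : HasDerivAt (fun w : ℂ => ((Real.pi / 2 : ℝ) : ℂ) * (w - c))
        ((Real.pi / 2 : ℝ) : ℂ) z := by
      simpa using ((hasDerivAt_id z).sub_const (c : ℂ)).const_mul ((Real.pi / 2 : ℝ) : ℂ)
    exact (h1.csin.sub h1).congr_deriv (by ring)
  refine hK.norm_image_sub_le_of_norm_hasDerivWithin_le (f := fun w : ℂ =>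
      Complex.sin (((Real.pi / 2 : ℝ) : ℂ) * (w - c)) - ((Real.pi / 2 : ℝ) : ℂ) * (w - c))
      (fun z _ => (hd z).hasDerivWithinAt) (fun z hz => ?_) hx hy
  have hp : 0 < Real.pi / 2 := by positivity
  rw [norm_mul, Complex.norm_real, Real.norm_of_nonneg hp.le]
  gcongr
  refine (norm_cos_sub_one _).trans ?_
  rw [arg_re, arg_im']
  exact hb z hz

lemma unique_zero (a : ℝ) (k : ℤ) (c : ℝ) (hc : c = 4 * a + 2 * k + 1) (hc3 : 3 ≤ c) (x y : ℂ)
    (hx : |x.re - c| ≤ 1) (h0x : E a 1 x + H a x = 0)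
    (hy : |y.re - c| ≤ 1) (h0y : E a 1 y + H a y = 0) : x = y := by
  obtain ⟨x1, x2, x3⟩ := loc a k c hc hc3 x hx h0x
  obtain ⟨y1, y2, y3⟩ := loc a k c hc hc3 y hy h0y
  obtain ⟨e, he, hE⟩ := E_sin a k c hc
  have hp := Real.pi_pos
  have hp2 : 0 < Real.pi / 2 := by positivity
  let r := max |x.re - c| |y.re - c|
  let q := max |x.im| |y.im|
  have hr0 : 0 ≤ r := le_max_of_le_left (abs_nonneg _)
  have hr : r ≤ 1 / 2 := max_le x1 y1
  have hcosr : 0.8899 ≤ Real.cos (Real.pi / 2 * r) := by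
    rcases max_choice |x.re - c| |y.re - c| with h | h
    · rw [show r = _ from h, ← abs_of_pos hp2, ← abs_mul, Real.cos_abs]; exact x2
    · rw [show r = _ from h, ← abs_of_pos hp2, ← abs_mul, Real.cos_abs]; exact y2
  have hcoshq : Real.cosh (Real.pi / 2 * q) ≤ 1.1237 := by
    rcases max_choice |x.im| |y.im| with h | h
    · rw [show q = _ from h, ← abs_of_pos hp2, ← abs_mul, Real.cosh_abs]; exact x3
    · rw [show q = _ from h, ← abs_of_pos hp2, ← abs_mul, Real.cosh_abs]; exact y3
  let K : Set ℂ := {w | w.re ∈ Icc (c - r) (c + r)} ∩ {w | w.im ∈ Icc (-q) q}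
  have hK : Convex ℝ K :=
    ((convex_Icc (c - r) (c + r)).linear_preimage Complex.reLm).inter
      ((convex_Icc (-q) q).linear_preimage Complex.imLm)
  have memK : ∀ w : ℂ, w ∈ K ↔ |w.re - c| ≤ r ∧ |w.im| ≤ q := by
    intro w
    simp only [K, mem_inter_iff, mem_ofPred_eq, mem_Icc, abs_le]
    constructor
    · rintro ⟨⟨h1, h2⟩, h3⟩; exact ⟨⟨by linarith, by linarith⟩, h3⟩
    · rintro ⟨⟨h1, h2⟩, h3⟩; exact ⟨⟨by linarith, by linarith⟩, h3⟩
  have hxK : x ∈ K := (memK x).2 ⟨le_max_left _ _, le_max_left _ _⟩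
  have hyK : y ∈ K := (memK y).2 ⟨le_max_right _ _, le_max_right _ _⟩
  have hcosh : ∀ w ∈ K, Real.cosh (Real.pi / 2 * w.im) ≤ 1.1237 := by
    intro w hw
    refine le_trans ?_ hcoshq
    rw [Real.cosh_le_cosh, abs_mul, abs_mul]
    exact mul_le_mul_of_nonneg_left (((memK w).1 hw).2.trans (le_abs_self _)) (abs_nonneg _)
  have hcos : ∀ w ∈ K, 0.8899 ≤ Real.cos (Real.pi / 2 * (w.re - c)) := by
    intro w hw
    refine hcosr.trans ?_
    rw [← Real.cos_abs (Real.pi / 2 * (w.re - c)), abs_mul, abs_of_pos hp2]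
    have := ((memK w).1 hw).1
    apply Real.cos_le_cos_of_nonneg_of_le_pi (by positivity) (by nlinarith)
    gcongr
  have h52 : ∀ w ∈ K, 5 / 2 ≤ w.re := by
    intro w hw
    have := (abs_le.1 (((memK w).1 hw).1)).1
    linarith
  have A := H_lip a 1.1237 K hK h52 hcosh x y hxK hyK
  have B := psi_lip c 0.2338 K hK
    (fun w hw => by have := hcosh w hw; have := hcos w hw; linarith) x y hxK hyK
  rw [hE] at h0x h0y
  have hC : ‖((Real.pi / 2 : ℝ) : ℂ) * (y - x)‖ ≤
      Real.pi / 2 * 0.2338 * ‖y - x‖ + 1.1237 * (Real.pi / 2 * 1.0192) * 0.645 * ‖y - x‖ := by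
    refine le_trans ?_ (add_le_add B A)
    rcases he with rfl | rfl
    · refine le_trans (le_of_eq ?_) (norm_add_le _ _)
      rw [← norm_neg]
      congr 1
      push_cast at h0x h0y ⊢
      linear_combination h0x - h0y
    · refine le_trans (le_of_eq ?_) (norm_sub_le _ _)
      rw [← norm_neg]
      congr 1
      push_cast at h0x h0y ⊢
      linear_combination h0y - h0x
  rw [norm_mul, Complex.norm_real, Real.norm_of_nonneg hp2.le] at hC
  by_contra hne
  have hpos : 0 < ‖y - x‖ := norm_pos_iff.2 (sub_ne_zero.2 (Ne.symm hne))
  have : 0 < Real.pi / 2 * ‖y - x‖ := by positivity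
  nlinarith

lemma E_conj (a : ℝ) (m : ℕ) (w : ℂ) :
    E a m ((starRingEnd ℂ) w) = (starRingEnd ℂ) (E a m w) := by
  simp only [E, map_mul, ← Complex.cos_conj, ← Complex.exp_conj, map_sub, map_neg, map_div₀,
    Complex.conj_ofReal, map_natCast, map_ofNat]

lemma H_conj (a : ℝ) (w : ℂ) :
    H a ((starRingEnd ℂ) w) = (starRingEnd ℂ) (H a w) := by
  simp only [H, E_conj, Complex.conj_tsum]

lemma zeta_iff (a : ℝ) (w : ℂ) (hw : 2 ≤ w.re) :
    hurwitzZeta (a : UnitAddCircle) (1 - w) = 0 ↔ E a 1 w + H a w = 0 := by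
  have hw1 : 1 < w.re := by linarith
  have hw0 : w ≠ 0 := by rintro rfl; norm_num at hw
  rw [hurwitzZeta_one_sub]
  rotate_left
  · rintro n rfl
    simp at hw
    linarith [(Nat.cast_nonneg n : (0:ℝ) ≤ n)]
  · right; rintro rfl; norm_num at hw
  have hG : Complex.Gamma w ≠ 0 := Complex.Gamma_ne_zero_of_re_pos (by linarith)
  have h2 : (2 * (Real.pi : ℂ)) ^ (-w) ≠ 0 := by
    rw [Ne, Complex.cpow_eq_zero_iff]
    rintro ⟨h, -⟩
    simp [Real.pi_ne_zero] at h
  rw [mul_eq_zero, or_iff_right (mul_ne_zero h2 hG)]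
  have s1 := (hasSum_expZeta_of_one_lt_re a hw1).mul_left (Complex.exp (-Real.pi * Complex.I * w / 2))
  have s2 := (hasSum_expZeta_of_one_lt_re (-a) hw1).mul_left
    (Complex.exp (Real.pi * Complex.I * w / 2))
  have s := s1.add s2
  rw [AddCircle.coe_neg] at s
  have hterm : ∀ n : ℕ, n ≠ 0 →
      Complex.exp (-Real.pi * Complex.I * w / 2) *
        (Complex.exp (2 * Real.pi * Complex.I * a * n) / (n : ℂ) ^ w) +
      Complex.exp (Real.pi * Complex.I * w / 2) *
        (Complex.exp (2 * Real.pi * Complex.I * (-a : ℝ) * n) / (n : ℂ) ^ w) = 2 * E a n w := by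
    intro n hn
    have hn' : (n : ℂ) ≠ 0 := by exact_mod_cast hn
    rw [Complex.cpow_def_of_ne_zero hn', ← Complex.natCast_log, div_eq_mul_inv (Complex.exp _),
      div_eq_mul_inv (Complex.exp _), ← Complex.exp_neg, E, Complex.cos]
    rw [show -(((Real.log n : ℝ) : ℂ) * w) = -w * (Real.log n : ℝ) by ring]
    rw [show (2 : ℂ) * ((Complex.exp ((Real.pi * w / 2 - 2 * Real.pi * a * n) * Complex.I) +
      Complex.exp (-(Real.pi * w / 2 - 2 * Real.pi * a * n) * Complex.I)) / 2 *
      Complex.exp (-w * (Real.log n : ℝ))) =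
      Complex.exp (-(Real.pi * w / 2 - 2 * Real.pi * a * n) * Complex.I) *
        Complex.exp (-w * (Real.log n : ℝ)) +
      Complex.exp ((Real.pi * w / 2 - 2 * Real.pi * a * n) * Complex.I) *
      Complex.exp (-w * (Real.log n : ℝ)) by ring]
    simp only [← Complex.exp_add]
    congr 2
    · ring
    · push_cast; ring
  have sumA := (hasSum_nat_add_iff' 2).2 s
  simp only [Finset.sum_range_succ, Finset.sum_range_zero, zero_add, Nat.cast_zero,
    Complex.zero_cpow hw0, div_zero, mul_zero, add_zero] at sumA
  have t1 := hterm 1 one_ne_zero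
  rw [t1] at sumA
  have sumB : HasSum (fun n : ℕ => 2 * E a (n + 2) w) _ :=
    sumA.congr_fun (fun n => (hterm (n + 2) (by omega)).symm)
  have := sumB.unique ((summable_E a w hw).hasSum.mul_left 2)
  rw [← H] at this
  constructor
  · intro h; rw [h] at this; linear_combination (-1/2) * this
  · intro h; linear_combination this + 2 * h

lemma exists_zero (a : ℝ) (k : ℤ) (c : ℝ) (hc : c = 4 * a + 2 * k + 1) (hc3 : 3 ≤ c) :
    ∃ u ∈ Ioo (c - 1) (c + 1), E a 1 (u : ℂ) + H a (u : ℂ) = 0 := by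
  obtain ⟨e, he, hE⟩ := E_sin a k c hc
  have him : ∀ u : ℝ, ((E a 1 (u : ℂ) + H a (u : ℂ)).re : ℂ) = E a 1 (u : ℂ) + H a (u : ℂ) := by
    intro u
    rw [← Complex.conj_eq_iff_re, map_add, ← E_conj, ← H_conj, Complex.conj_ofReal]
  have hcont : ContinuousOn (fun u : ℝ => e * (E a 1 (u : ℂ) + H a (u : ℂ)).re)
      (Icc (c - 1) (c + 1)) := by
    refine continuousOn_const.mul (Complex.continuous_re.comp_continuousOn (ContinuousOn.add ?_ ?_))
    · have : Continuous (E a 1) :=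
        continuous_iff_continuousAt.2 fun z => (hasDeriv_E a 1 z).continuousAt
      exact (this.comp Complex.continuous_ofReal).continuousOn
    · unfold H
      refine continuousOn_tsum (fun n => ?_) sum_tail.summable (fun n u hu => ?_)
      · have : Continuous (E a (n + 2)) :=
          continuous_iff_continuousAt.2 fun z => (hasDeriv_E a (n + 2) z).continuousAt
        exact (this.comp Complex.continuous_ofReal).continuousOn
      · have := E_le2 a (u : ℂ) (by rw [Complex.ofReal_re]; linarith [hu.1]) n
        simpa using this
  have hval : ∀ u : ℝ, 2 ≤ u → |e * (E a 1 (u : ℂ) + H a (u : ℂ)).re -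
      Real.sin (Real.pi / 2 * (u - c))| ≤ 0.645 := by
    intro u hu
    have h1 := H_le2 a (u : ℂ) (by simpa using hu)
    simp only [Complex.ofReal_im, mul_zero, Real.cosh_zero, mul_one] at h1
    have h2 := (Complex.abs_re_le_norm _).trans h1
    rw [Complex.add_re, hE, show ((Real.pi / 2 : ℝ) : ℂ) * ((u : ℂ) - c) =
      ((Real.pi / 2 * (u - c) : ℝ) : ℂ) by push_cast; ring, ← Complex.ofReal_sin,
      ← Complex.ofReal_mul, Complex.ofReal_re]
    rcases he with rfl | rfl
    · rw [abs_le] at h2 ⊢; constructor <;> linarith [h2.1, h2.2]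
    · rw [abs_le] at h2 ⊢; constructor <;> linarith [h2.1, h2.2]
  have v1 := abs_le.1 (hval (c - 1) (by linarith))
  have v2 := abs_le.1 (hval (c + 1) (by linarith))
  rw [show Real.pi / 2 * (c - 1 - c) = -(Real.pi / 2) by ring, Real.sin_neg,
    Real.sin_pi_div_two] at v1
  rw [show Real.pi / 2 * (c + 1 - c) = (Real.pi / 2) by ring, Real.sin_pi_div_two] at v2
  obtain ⟨u, hu, hu0⟩ := intermediate_value_Ioo (by linarith) hcont
    (show (0 : ℝ) ∈ Ioo _ _ from ⟨by linarith [v1.2], by linarith [v2.1]⟩)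
  refine ⟨u, hu, ?_⟩
  rw [← him]
  have : (E a 1 (u : ℂ) + H a (u : ℂ)).re = 0 := by
    rcases he with rfl | rfl <;> linarith [hu0]
  rw [this, Complex.ofReal_zero]

end Spira

/-- Spira's theorem: for `0 < a ≤ 1`, any zero `s` of `ζ(·, a)` with
`Re s ≤ -(4a + 1 + 2⌊1 - 2a⌋)` and `|Im s| ≤ 1` lies on the real axis; moreover, for each
integer `n ≥ 1 - 2a` there is exactly one real zero in `(-2n - 4a - 1, -2n - 4a + 1)`. -/
theorem spira_zero_free_region (a : ℝ) (ha : 0 < a) (ha' : a ≤ 1) :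
    (∀ s : ℂ, s.re ≤ -(4 * a + 1 + 2 * (⌊1 - 2 * a⌋ : ℝ)) → |s.im| ≤ 1 →
        hurwitzZeta (a : UnitAddCircle) s = 0 → s.im = 0) ∧
      (∀ n : ℤ, 1 - 2 * a ≤ (n : ℝ) →
        ∃! σ : ℝ, σ ∈ Set.Ioo (-2 * (n : ℝ) - 4 * a - 1) (-2 * (n : ℝ) - 4 * a + 1) ∧
          hurwitzZeta (a : UnitAddCircle) (σ : ℂ) = 0) := by
  constructor
  · intro s hs _ h0
    obtain ⟨w, rfl⟩ : ∃ w : ℂ, s = 1 - w := ⟨1 - s, by ring⟩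
    simp only [Complex.sub_re, Complex.one_re] at hs
    set k : ℤ := ⌊(w.re - 4 * a) / 2⌋ with hk
    have hk1 : (k : ℝ) ≤ (w.re - 4 * a) / 2 := Int.floor_le _
    have hk2 : (w.re - 4 * a) / 2 < k + 1 := Int.lt_floor_add_one _
    have hf := Int.lt_floor_add_one (1 - 2 * a)
    have hk3 : 1 + ⌊1 - 2 * a⌋ ≤ k := by
      rw [hk, Int.le_floor]; push_cast; linarith
    have hk3' : (1 : ℝ) + (⌊1 - 2 * a⌋ : ℝ) ≤ k := by exact_mod_cast hk3
    have hw2 : 2 ≤ w.re := by linarith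
    have hc3 : 3 ≤ 4 * a + 2 * (k : ℝ) + 1 := by linarith
    rw [Spira.zeta_iff a w hw2] at h0
    have habs : |w.re - (4 * a + 2 * (k : ℝ) + 1)| ≤ 1 :=
      abs_le.2 ⟨by linarith, by linarith⟩
    have := Spira.unique_zero a k _ rfl hc3 w ((starRingEnd ℂ) w) habs h0
      (by rw [Complex.conj_re]; exact habs)
      (by rw [Spira.E_conj, Spira.H_conj, ← map_add, h0, map_zero])
    have him := Complex.conj_eq_iff_im.1 this.symm
    simp [him]
  · intro n hn
    have hc3 : 3 ≤ 4 * a + 2 * (n : ℝ) + 1 := by linarith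
    obtain ⟨u, hu, hu0⟩ := Spira.exists_zero a n _ rfl hc3
    refine ⟨1 - u, ⟨⟨by linarith [hu.2], by linarith [hu.1]⟩, ?_⟩, ?_⟩
    · push_cast
      exact (Spira.zeta_iff a u (by rw [Complex.ofReal_re]; linarith [hu.1])).2 hu0
    · rintro σ ⟨⟨h1, h2⟩, hσ⟩
      have hσ' : hurwitzZeta (a : UnitAddCircle) (1 - ((1 - σ : ℝ) : ℂ)) = 0 := by
        rw [← hσ]; congr 1; push_cast; ring
      rw [Spira.zeta_iff a _ (by rw [Complex.ofReal_re]; linarith)] at hσ'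
      have := Spira.unique_zero a n _ rfl hc3 u ((1 - σ : ℝ) : ℂ)
        (by rw [Complex.ofReal_re]; exact abs_le.2 ⟨by linarith [hu.1], by linarith [hu.2]⟩) hu0
        (by rw [Complex.ofReal_re]; exact abs_le.2 ⟨by linarith, by linarith⟩) hσ'
      have := Complex.ofReal_injective this
      linarith
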